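/- Let f be an inner function with f(0)=0. Suppose for k=1,…,p, n_k and j_k are positive integers with max{n_k, j_k} < min{n_{k+1}, j_{k+1}} for each k=1,…,p−1. Then ∫_{∂𝔻} ∏_{k=1}^p f^{n_k}·conj(f^{j_k}) dm = ∏_{k=1}^p ∫_{∂𝔻} f^{n_k}·conj(f^{j_k}) dm. -/

import Mathlib

open MeasureTheory Set Metric Filter Complex

/-- Normalized Lebesgue (arc-length) measure on the unit circle, as a measure on ℂ. -/
noncomputable def m : Measure ℂ :=
  (ENNReal.ofReal (2 * Real.pi))⁻¹ •
    (Measure.map (fun θ : ℝ => Complex.exp ((θ : ℂ) * Complex.I))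
      (volume.restrict (Set.Ioc (0:ℝ) (2 * Real.pi))))

/-- `spow F ε n` is `F^[n]` if `ε = 1` and its complex conjugate if `ε = -1`. -/
noncomputable def spow (F : ℂ → ℂ) (ε : ℤ) (n : ℕ) (z : ℂ) : ℂ :=
  if ε = 1 then F^[n] z else (starRingEnd ℂ) (F^[n] z)

theorem aemeasurable_expMap (μ : Measure ℝ) :
    AEMeasurable (fun θ : ℝ => Complex.exp ((θ : ℂ) * Complex.I)) μ := by
  fun_prop

instance isProbabilityMeasure_m : IsProbabilityMeasure m := by
  constructor
  have hpi : 0 < 2 * Real.pi := Real.two_pi_pos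
  rw [m, Measure.smul_apply, Measure.map_apply_of_aemeasurable (aemeasurable_expMap _) .univ]
  simp only [preimage_univ, Measure.restrict_apply_univ, Real.volume_Ioc, sub_zero, smul_eq_mul]
  exact ENNReal.inv_mul_cancel (by simpa using hpi) ENNReal.ofReal_ne_top

theorem ae_norm_eq_one : ∀ᵐ z ∂m, ‖z‖ = 1 := by
  refine Measure.ae_smul_measure ?_ _
  rw [ae_map_iff (aemeasurable_expMap _) (measurableSet_eq_fun (by fun_prop) (by fun_prop))]
  exact ae_of_all _ Complex.norm_exp_ofReal_mul_I

theorem integral_m_eq_circleAverage {h : ℂ → ℂ} (hh : AEStronglyMeasurable h m) :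
    ∫ z, h z ∂m = Real.circleAverage h 0 1 := by
  have hpi : 0 < 2 * Real.pi := Real.two_pi_pos
  have hh' : AEStronglyMeasurable h _ := hh.mono_ac (Measure.absolutelyContinuous_smul
    (ENNReal.inv_ne_zero.2 (ENNReal.ofReal_ne_top (r := 2 * Real.pi))))
  rw [m, integral_smul_measure, integral_map (aemeasurable_expMap _) hh', Real.circleAverage_def,
    intervalIntegral.integral_of_le hpi.le]
  simp [circleMap, Real.pi_pos.le]

theorem aestronglyMeasurable_of_continuousOn_sphere {h : ℂ → ℂ}
    (hh : ContinuousOn h (sphere 0 1)) : AEStronglyMeasurable h m := by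
  have hm : m.restrict (sphere 0 1) = m :=
    Measure.restrict_eq_self_of_ae_mem (by simpa using ae_norm_eq_one)
  rw [← hm]
  exact hh.aestronglyMeasurable isClosed_sphere.measurableSet

theorem continuousOn_dilate {h : ℂ → ℂ} (hh : DifferentiableOn ℂ h (ball 0 1)) {r : ℝ}
    (hr : r ∈ Ioo (0 : ℝ) 1) : ContinuousOn (fun z => h (r * z)) (sphere 0 1) :=
  hh.continuousOn.comp (by fun_prop) fun z hz => by
    simpa [mem_sphere_zero_iff_norm.1 hz, abs_of_pos hr.1] using hr.2

theorem integral_dilate {h : ℂ → ℂ} (hh : DifferentiableOn ℂ h (ball 0 1)) {r : ℝ}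
    (hr : r ∈ Ioo (0 : ℝ) 1) : ∫ z, h (r * z) ∂m = h 0 := by
  rw [integral_m_eq_circleAverage
    (aestronglyMeasurable_of_continuousOn_sphere (continuousOn_dilate hh hr))]
  have hd : DiffContOnCl ℂ (fun z => h (r * z)) (ball 0 |1|) := by
    refine DifferentiableOn.diffContOnCl ?_
    rw [abs_one, closure_ball _ one_ne_zero]
    refine hh.comp (by fun_prop) fun z hz => ?_
    have hz' : ‖z‖ ≤ 1 := by simpa using hz
    rw [mem_ball_zero_iff, norm_mul, Complex.norm_real, Real.norm_of_nonneg hr.1.le]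
    nlinarith [hr.1, hr.2]
  simpa using hd.circleAverage

theorem eventually_mem_Ioo_half : ∀ᶠ r in nhdsWithin (1 : ℝ) (Iio 1), r ∈ Ioo (1 / 2 : ℝ) 1 :=
  Ioo_mem_nhdsLT (by norm_num)

/-- A holomorphic function that is bounded near the unit circle has its radial boundary values
average to its value at the origin. -/
theorem integral_radialLimit {h H : ℂ → ℂ} (hh : DifferentiableOn ℂ h (ball 0 1)) (C : ℝ)
    (hC : ∀ r ∈ Ioo (1 / 2 : ℝ) 1, ∀ z : ℂ, ‖z‖ = 1 → ‖h (r * z)‖ ≤ C)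
    (hH : ∀ᵐ z ∂m, Tendsto (fun r : ℝ => h (r * z)) (nhdsWithin 1 (Iio 1)) (nhds (H z))) :
    ∫ z, H z ∂m = h 0 := by
  have hsub : ∀ r ∈ Ioo (1 / 2 : ℝ) 1, r ∈ Ioo (0 : ℝ) 1 := fun r hr => ⟨by linarith [hr.1], hr.2⟩
  refine tendsto_nhds_unique (tendsto_integral_filter_of_dominated_convergence
    (F := fun (r : ℝ) z => h (r * z)) (fun _ => C) ?_ ?_ (integrable_const C) hH) ?_
  · filter_upwards [eventually_mem_Ioo_half] with r hr
    exact aestronglyMeasurable_of_continuousOn_sphere (continuousOn_dilate hh (hsub r hr))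
  · filter_upwards [eventually_mem_Ioo_half] with r hr
    filter_upwards [ae_norm_eq_one] with z hz using hC r hr z hz
  · refine tendsto_const_nhds.congr' ?_
    filter_upwards [eventually_mem_Ioo_half] with r hr
    exact (integral_dilate hh (hsub r hr)).symm

theorem aemeasurable_radialLimit {h H : ℂ → ℂ} (hh : DifferentiableOn ℂ h (ball 0 1))
    (hH : ∀ᵐ z ∂m, Tendsto (fun r : ℝ => h (r * z)) (nhdsWithin 1 (Iio 1)) (nhds (H z))) :
    AEMeasurable H m := by
  obtain ⟨u, -, hu, hlim⟩ := exists_seq_strictMono_tendsto' (show (0 : ℝ) < 1 by norm_num)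
  have hu' : Tendsto u atTop (nhdsWithin 1 (Iio 1)) :=
    tendsto_nhdsWithin_iff.2 ⟨hlim, Eventually.of_forall fun k => (hu k).2⟩
  refine aemeasurable_of_tendsto_metrizable_ae atTop (f := fun k z => h (u k * z)) (fun k => ?_) ?_
  · exact (aestronglyMeasurable_of_continuousOn_sphere (continuousOn_dilate hh (hu k))).aemeasurable
  · filter_upwards [hH] with z hz using hz.comp hu'

/-- On the unit circle, continuous functions are uniform limits of Laurent polynomials. -/
theorem exists_laurent_approx {g : ℂ → ℂ} (hg : Continuous g) {ε : ℝ} (hε : 0 < ε) :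
    ∃ Q ∈ Submodule.span ℂ (range fun (k : ℤ) (z : ℂ) => z ^ k),
      ∀ z : ℂ, ‖z‖ = 1 → ‖g z - Q z‖ ≤ ε := by
  let G : C(AddCircle (1 : ℝ), ℂ) :=
    ⟨fun x => g (AddCircle.toCircle x), hg.comp (by fun_prop)⟩
  have hG : G ∈ closure (Submodule.span ℂ (range (fourier (T := 1))) : Set _) := by
    have := (span_fourier_closure_eq_top (T := 1)).ge (Submodule.mem_top (x := G))
    rwa [← SetLike.mem_coe, Submodule.topologicalClosure_coe] at this
  obtain ⟨q, hq, hGq⟩ := Metric.mem_closure_iff.1 hG ε hε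
  have key : ∀ q ∈ Submodule.span ℂ (range (fourier (T := 1))),
      ∃ Q ∈ Submodule.span ℂ (range fun (k : ℤ) (z : ℂ) => z ^ k),
        ∀ x, q x = Q (AddCircle.toCircle x) := by
    intro q hq
    induction hq using Submodule.span_induction with
    | mem q hq =>
      obtain ⟨k, rfl⟩ := hq
      exact ⟨_, Submodule.subset_span ⟨k, rfl⟩, fun x => by
        simp [fourier_apply, AddCircle.toCircle_zsmul]⟩
    | zero => exact ⟨0, Submodule.zero_mem _, fun x => rfl⟩
    | add q₁ q₂ _ _ h₁ h₂ =>
      obtain ⟨Q₁, hQ₁, e₁⟩ := h₁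
      obtain ⟨Q₂, hQ₂, e₂⟩ := h₂
      exact ⟨Q₁ + Q₂, Submodule.add_mem _ hQ₁ hQ₂, fun x => by simp [e₁, e₂]⟩
    | smul a q _ h =>
      obtain ⟨Q, hQ, e⟩ := h
      exact ⟨a • Q, Submodule.smul_mem _ _ hQ, fun x => by simp [e]⟩
  obtain ⟨Q, hQ, e⟩ := key q hq
  refine ⟨Q, hQ, fun z hz => ?_⟩
  obtain ⟨x, hx⟩ := (AddCircle.homeomorphCircle (one_ne_zero (α := ℝ))).surjective
    ⟨z, mem_sphere_zero_iff_norm.2 hz⟩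
  have hx' : (AddCircle.toCircle x : ℂ) = z := by
    rw [AddCircle.homeomorphCircle_apply] at hx
    rw [hx]
  have := (ContinuousMap.dist_apply_le_dist (f := G) (g := q) x).trans hGq.le
  rwa [dist_eq_norm, e, hx', show G x = g z from congrArg g hx'] at this

/-- The transfer identity `∫ φ · (g ∘ F) = ∫ ψ · g` extends from Laurent monomials to continuous
functions. -/
theorem integral_comp_eq_of_zpow {F φ ψ : ℂ → ℂ} (hF : Measurable F)
    (hF1 : ∀ᵐ z ∂m, ‖F z‖ = 1) (hφ : Continuous φ) (hψ : Continuous ψ) (C : ℝ)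
    (hφC : ∀ z : ℂ, ‖z‖ = 1 → ‖φ z‖ ≤ C) (hψC : ∀ z : ℂ, ‖z‖ = 1 → ‖ψ z‖ ≤ C)
    (hmom : ∀ k : ℤ, ∫ z, φ z * F z ^ k ∂m = ∫ z, ψ z * z ^ k ∂m)
    {g : ℂ → ℂ} (hg : Continuous g) :
    ∫ z, φ z * g (F z) ∂m = ∫ z, ψ z * g z ∂m := by
  have hbdd : ∀ Q : ℂ → ℂ, Measurable Q → (∃ B, ∀ z : ℂ, ‖z‖ = 1 → ‖Q z‖ ≤ B) →
      Integrable (fun z => φ z * Q (F z)) m ∧ Integrable (fun z => ψ z * Q z) m := by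
    rintro Q hQ ⟨B, hB⟩
    refine ⟨.of_bound (C := C * B) (hφ.measurable.mul (hQ.comp hF)).aestronglyMeasurable ?_,
      .of_bound (C := C * B) (hψ.measurable.mul hQ).aestronglyMeasurable ?_⟩
    · filter_upwards [ae_norm_eq_one, hF1] with z hz hFz
      rw [norm_mul]
      exact mul_le_mul (hφC z hz) (hB _ hFz) (norm_nonneg _) ((norm_nonneg _).trans (hφC z hz))
    · filter_upwards [ae_norm_eq_one] with z hz
      rw [norm_mul]
      exact mul_le_mul (hψC z hz) (hB _ hz) (norm_nonneg _) ((norm_nonneg _).trans (hψC z hz))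
  have hlaurent : ∀ Q ∈ Submodule.span ℂ (range fun (k : ℤ) (z : ℂ) => z ^ k),
      (Measurable Q ∧ ∃ B, ∀ z : ℂ, ‖z‖ = 1 → ‖Q z‖ ≤ B) ∧
        ∫ z, φ z * Q (F z) ∂m = ∫ z, ψ z * Q z ∂m := by
    intro Q hQ
    induction hQ using Submodule.span_induction with
    | mem Q hQ =>
      obtain ⟨k, rfl⟩ := hQ
      exact ⟨⟨by fun_prop, 1, fun z hz => by simp [hz]⟩, hmom k⟩
    | zero => exact ⟨⟨measurable_zero, 0, by simp⟩, by simp⟩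
    | add Q₁ Q₂ _ _ h₁ h₂ =>
      obtain ⟨⟨m₁, B₁, hB₁⟩, e₁⟩ := h₁
      obtain ⟨⟨m₂, B₂, hB₂⟩, e₂⟩ := h₂
      refine ⟨⟨m₁.add m₂, B₁ + B₂, fun z hz =>
        (norm_add_le _ _).trans (add_le_add (hB₁ z hz) (hB₂ z hz))⟩, ?_⟩
      have i₁ := hbdd Q₁ m₁ ⟨B₁, hB₁⟩
      have i₂ := hbdd Q₂ m₂ ⟨B₂, hB₂⟩
      simp only [Pi.add_apply, mul_add]
      rw [integral_add i₁.1 i₂.1, integral_add i₁.2 i₂.2, e₁, e₂]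
    | smul a Q _ h =>
      obtain ⟨⟨m₁, B, hB⟩, e⟩ := h
      refine ⟨⟨m₁.const_smul a, ‖a‖ * B, fun z hz => ?_⟩, ?_⟩
      · rw [Pi.smul_apply, norm_smul]
        exact mul_le_mul_of_nonneg_left (hB z hz) (norm_nonneg _)
      · simp only [Pi.smul_apply, smul_eq_mul, mul_left_comm _ a]
        rw [integral_const_mul, integral_const_mul, e]
  have hgB : ∃ B, ∀ z : ℂ, ‖z‖ = 1 → ‖g z‖ ≤ B := by
    obtain ⟨B, hB⟩ := (isCompact_sphere (0 : ℂ) 1).exists_bound_of_continuousOn hg.continuousOn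
    exact ⟨B, fun z hz => hB z (mem_sphere_zero_iff_norm.2 hz)⟩
  have ig := hbdd g hg.measurable hgB
  have hC : 0 ≤ C := (norm_nonneg _).trans (hφC 1 (by simp))
  refine eq_of_forall_dist_le fun ε hε => ?_
  obtain ⟨Q, hQ, hgQ⟩ := exists_laurent_approx hg (ε := ε / (2 * (C + 1))) (by positivity)
  obtain ⟨⟨mQ, hQB⟩, e⟩ := hlaurent Q hQ
  have iQ := hbdd Q mQ hQB
  have d₁ : ‖∫ z, φ z * g (F z) ∂m - ∫ z, φ z * Q (F z) ∂m‖ ≤ C * (ε / (2 * (C + 1))) := by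
    rw [← integral_sub ig.1 iQ.1]
    refine (norm_integral_le_of_norm_le_const (C := C * (ε / (2 * (C + 1)))) ?_).trans (by simp)
    filter_upwards [ae_norm_eq_one, hF1] with z hz hFz
    rw [← mul_sub, norm_mul]
    exact mul_le_mul (hφC z hz) (hgQ _ hFz) (norm_nonneg _) hC
  have d₂ : ‖∫ z, ψ z * g z ∂m - ∫ z, ψ z * Q z ∂m‖ ≤ C * (ε / (2 * (C + 1))) := by
    rw [← integral_sub ig.2 iQ.2]
    refine (norm_integral_le_of_norm_le_const (C := C * (ε / (2 * (C + 1)))) ?_).trans (by simp)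
    filter_upwards [ae_norm_eq_one] with z hz
    rw [← mul_sub, norm_mul]
    exact mul_le_mul (hψC z hz) (hgQ _ hz) (norm_nonneg _) hC
  have hle : C * (ε / (2 * (C + 1))) + C * (ε / (2 * (C + 1))) ≤ ε := by
    rw [← sub_nonneg]
    have : ε - (C * (ε / (2 * (C + 1))) + C * (ε / (2 * (C + 1)))) = ε / (C + 1) := by
      field_simp
      ring
    rw [this]
    positivity
  rw [e] at d₁
  rw [← dist_eq_norm] at d₁ d₂
  exact (dist_triangle_right _ _ _).trans ((add_le_add d₁ d₂).trans hle)

/-- `f` is an inner function fixing the origin, and `F` is a measurable version of its radial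
boundary values. -/
structure IsInnerFixingZero (f F : ℂ → ℂ) : Prop where
  differentiableOn : DifferentiableOn ℂ f (ball 0 1)
  mapsTo : MapsTo f (ball 0 1) (ball 0 1)
  map_zero : f 0 = 0
  tendsto_radial : ∀ᵐ z ∂m,
    Tendsto (fun r : ℝ => f (r * z)) (nhdsWithin 1 (Iio 1)) (nhds (F z))
  norm_eq_one : ∀ᵐ z ∂m, ‖F z‖ = 1
  measurable : Measurable F

theorem tendsto_ofReal_mul_radial (z : ℂ) :
    Tendsto (fun r : ℝ => (r : ℂ) * z) (nhdsWithin 1 (Iio 1)) (nhds z) := by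
  have : Tendsto (fun r : ℝ => (r : ℂ) * z) (nhds 1) (nhds (((1 : ℝ) : ℂ) * z)) :=
    Continuous.tendsto (by fun_prop) _
  simpa using this.mono_left nhdsWithin_le_nhds

namespace IsInnerFixingZero

variable {f F : ℂ → ℂ}

theorem id : IsInnerFixingZero (fun z => z) (fun z => z) where
  differentiableOn := differentiableOn_id
  mapsTo := mapsTo_id _
  map_zero := rfl
  tendsto_radial := ae_of_all _ tendsto_ofReal_mul_radial
  norm_eq_one := ae_norm_eq_one
  measurable := measurable_id

theorem norm_dilate_le (h : IsInnerFixingZero f F) {r : ℝ} (hr : r ∈ Ioo (1 / 2 : ℝ) 1) {z : ℂ}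
    (hz : ‖z‖ = 1) : ‖f (r * z)‖ ≤ 1 := by
  have hr0 : 0 < r := by linarith [hr.1]
  have : (r : ℂ) * z ∈ ball (0 : ℂ) 1 := by simpa [hz, abs_of_pos hr0] using hr.2
  simpa using (mem_ball_zero_iff.1 (h.mapsTo this)).le

theorem integral_pow (h : IsInnerFixingZero f F) (k : ℕ) : ∫ z, F z ^ k ∂m = 0 ^ k := by
  rw [integral_radialLimit (h := fun z => f z ^ k) (h.differentiableOn.pow k) 1, h.map_zero]
  · intro r hr z hz
    rw [norm_pow]
    exact pow_le_one₀ (norm_nonneg _) (h.norm_dilate_le hr hz)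
  · filter_upwards [h.tendsto_radial] with z hz using hz.pow k

theorem integral_mul_pow (h : IsInnerFixingZero f F) (k : ℕ) : ∫ z, z * F z ^ k ∂m = 0 := by
  rw [integral_radialLimit (h := fun z => z * f z ^ k)
    (differentiableOn_id.mul (h.differentiableOn.pow k)) 1, zero_mul]
  · intro r hr z hz
    have hr0 : 0 < r := by linarith [hr.1]
    rw [norm_mul, norm_pow, norm_mul, hz, Complex.norm_real, Real.norm_of_nonneg hr0.le, mul_one]
    exact mul_le_one₀ hr.2.le (by positivity)
      (pow_le_one₀ (norm_nonneg _) (h.norm_dilate_le hr hz))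
  · filter_upwards [h.tendsto_radial] with z hz
    exact (tendsto_ofReal_mul_radial z).mul (hz.pow k)

theorem integral_inv_mul_pow_succ (h : IsInnerFixingZero f F) (k : ℕ) :
    ∫ z, z⁻¹ * F z ^ (k + 1) ∂m = deriv f 0 * 0 ^ k := by
  have hslope : ∀ w : ℂ, w ≠ 0 → dslope f 0 w = w⁻¹ * f w := fun w hw => by
    simp [dslope_of_ne _ hw, slope_def_module, h.map_zero]
  rw [integral_radialLimit (h := fun z => dslope f 0 z * f z ^ k) (((differentiableOn_dslope
    (ball_mem_nhds 0 one_pos)).2 h.differentiableOn).mul (h.differentiableOn.pow k)) 2,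
    dslope_same, h.map_zero]
  · intro r hr z hz
    have hr0 : 0 < r := by linarith [hr.1]
    have hz0 : z ≠ 0 := fun h0 => by simp [h0] at hz
    have hf1 := h.norm_dilate_le hr hz
    have hr2 : r⁻¹ ≤ 2 := by
      rw [inv_le_comm₀ hr0 two_pos]
      linarith [hr.1]
    rw [hslope _ (mul_ne_zero (by exact_mod_cast hr0.ne') hz0), norm_mul, norm_pow, norm_mul,
      norm_inv, norm_mul, hz, Complex.norm_real, Real.norm_of_nonneg hr0.le, mul_one, mul_assoc]
    exact (mul_le_of_le_one_right (by positivity)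
      (mul_le_one₀ hf1 (by positivity) (pow_le_one₀ (norm_nonneg _) hf1))).trans hr2
  · filter_upwards [h.tendsto_radial, ae_norm_eq_one] with z hz hz1
    have hz0 : z ≠ 0 := fun h0 => by simp [h0] at hz1
    rw [pow_succ', ← mul_assoc]
    refine Tendsto.mul ?_ (hz.pow k)
    refine (((tendsto_ofReal_mul_radial z).inv₀ hz0).mul hz).congr' ?_
    filter_upwards [eventually_mem_Ioo_half] with r hr
    have hr0 : 0 < r := by linarith [hr.1]
    exact (hslope _ (mul_ne_zero (by exact_mod_cast hr0.ne') hz0)).symm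

theorem integral_zpow (h : IsInnerFixingZero f F) (k : ℤ) :
    ∫ z, F z ^ k ∂m = if k = 0 then 1 else 0 := by
  obtain ⟨l, rfl | rfl⟩ := k.eq_nat_or_neg
  · simp [h.integral_pow, zero_pow_eq]
  · have : ∫ z, F z ^ (-(l : ℤ)) ∂m = ∫ z, (starRingEnd ℂ) (F z ^ l) ∂m := by
      refine integral_congr_ae ?_
      filter_upwards [h.norm_eq_one] with z hz
      rw [zpow_neg, zpow_natCast, Complex.inv_eq_conj (by simp [hz])]
    rw [this, integral_conj, h.integral_pow]
    simp [zero_pow_eq, apply_ite]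

theorem integral_mul_zpow (h : IsInnerFixingZero f F) (k : ℤ) :
    ∫ z, z * F z ^ k ∂m = if k = -1 then (starRingEnd ℂ) (deriv f 0) else 0 := by
  obtain ⟨l, rfl | rfl⟩ := k.eq_nat_or_neg
  · simp only [zpow_natCast, h.integral_mul_pow]
    rw [if_neg (by omega)]
  · cases l with
    | zero => simpa using h.integral_mul_pow 0
    | succ l =>
      have : ∫ z, z * F z ^ (-((l + 1 : ℕ) : ℤ)) ∂m
          = ∫ z, (starRingEnd ℂ) (z⁻¹ * F z ^ (l + 1)) ∂m := by
        refine integral_congr_ae ?_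
        filter_upwards [h.norm_eq_one, ae_norm_eq_one] with z hz hz1
        rw [zpow_neg, zpow_natCast, Complex.inv_eq_conj (by simp [hz]), map_mul,
          Complex.inv_eq_conj hz1, Complex.conj_conj]
      rw [this, integral_conj, h.integral_inv_mul_pow_succ]
      rcases l with _ | l
      · simp
      · rw [if_neg (by push_cast; omega)]
        simp

theorem measurePreserving (h : IsInnerFixingZero f F) : MeasurePreserving F m m := by
  refine ⟨h.measurable, ?_⟩
  have := Measure.isProbabilityMeasure_map (μ := m) h.measurable.aemeasurable
  refine ext_of_forall_integral_eq_of_IsFiniteMeasure fun g => ?_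
  rw [integral_map h.measurable.aemeasurable g.continuous.aestronglyMeasurable]
  have key := integral_comp_eq_of_zpow (φ := fun _ => 1) (ψ := fun _ => 1) h.measurable
    h.norm_eq_one continuous_const continuous_const 1 (by simp) (by simp)
    (fun k => by simp [h.integral_zpow, id.integral_zpow]) (g := fun z => (g z : ℂ))
    (by fun_prop)
  simp only [one_mul] at key
  rw [integral_complex_ofReal, integral_complex_ofReal] at key
  exact_mod_cast key

theorem integrable_comp (h : IsInnerFixingZero f F) {g : ℂ → ℂ} (hg : Integrable g m) :
    Integrable (fun z => g (F z)) m :=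
  h.measurePreserving.integrable_comp_of_integrable hg

theorem integral_comp (h : IsInnerFixingZero f F) {g : ℂ → ℂ} (hg : AEStronglyMeasurable g m) :
    ∫ z, g (F z) ∂m = ∫ z, g z ∂m := by
  have hmp := h.measurePreserving
  conv_rhs => rw [← hmp.map_eq]
  exact (integral_map hmp.measurable.aemeasurable (by rwa [hmp.map_eq])).symm

/-- The conditional expectation of the coordinate function given `F` is a multiple of `F`. -/
theorem integral_mul_comp (h : IsInnerFixingZero f F) {g : ℂ → ℂ} (hg : Integrable g m) :
    ∫ z, z * g (F z) ∂m = (starRingEnd ℂ) (deriv f 0) * ∫ z, z * g z ∂m := by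
  set c := (starRingEnd ℂ) (deriv f 0)
  have hcont : ∀ q : ℂ → ℂ, Continuous q →
      ∫ z, z * q (F z) ∂m = ∫ z, c * z * q z ∂m := fun q hq => by
    refine integral_comp_eq_of_zpow h.measurable h.norm_eq_one continuous_id (by fun_prop)
      (max 1 ‖c‖) (fun z hz => by simp [hz]) (fun z hz => by simp [hz]) (fun k => ?_) hq
    simp only [_root_.id, mul_assoc]
    rw [integral_const_mul, h.integral_mul_zpow, id.integral_mul_zpow]
    simp [c]
  have hint : ∀ q : ℂ → ℂ, Integrable q m → Integrable (fun z => z * q z) m := fun q hq => by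
    refine hq.bdd_mul (c := 1) (by fun_prop) ?_
    filter_upwards [ae_norm_eq_one] with z hz using hz.le
  have hint' : ∀ q : ℂ → ℂ, Integrable q m → Integrable (fun z => z * q (F z)) m :=
    fun q hq => hint _ (h.integrable_comp hq)
  rw [← integral_const_mul]
  simp only [← mul_assoc]
  refine eq_of_forall_dist_le fun ε hε => ?_
  obtain ⟨q, hq, hqi⟩ := hg.exists_boundedContinuous_integral_sub_le
    (show 0 < ε / (1 + ‖c‖) by positivity)
  have d₁ : dist (∫ z, z * g (F z) ∂m) (∫ z, z * q (F z) ∂m) ≤ ε / (1 + ‖c‖) := by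
    rw [dist_eq_norm, ← integral_sub (hint' _ hg) (hint' _ hqi)]
    refine (norm_integral_le_integral_norm _).trans (le_trans (le_of_eq ?_) hq)
    have hn : AEStronglyMeasurable (fun z => ‖g z - q z‖) (m.map F) := by
      rw [h.measurePreserving.map_eq]
      exact (hg.sub hqi).norm.aestronglyMeasurable
    conv_rhs => rw [← h.measurePreserving.map_eq]
    rw [integral_map h.measurable.aemeasurable hn]
    refine integral_congr_ae ?_
    filter_upwards [ae_norm_eq_one] with z hz
    rw [← mul_sub, norm_mul, hz, one_mul]
  have d₂ : dist (∫ z, c * z * g z ∂m) (∫ z, c * z * q z ∂m) ≤ ‖c‖ * (ε / (1 + ‖c‖)) := by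
    simp only [mul_assoc]
    rw [integral_const_mul, integral_const_mul, dist_eq_norm, ← mul_sub, norm_mul,
      ← integral_sub (hint _ hg) (hint _ hqi)]
    refine mul_le_mul_of_nonneg_left ?_ (norm_nonneg _)
    refine (norm_integral_le_integral_norm _).trans (le_trans (le_of_eq ?_) hq)
    refine integral_congr_ae ?_
    filter_upwards [ae_norm_eq_one] with z hz
    rw [← mul_sub, norm_mul, hz, one_mul]
  rw [hcont q q.continuous] at d₁
  refine (dist_triangle_right _ _ _).trans ((add_le_add d₁ d₂).trans (le_of_eq ?_))
  field_simp

theorem measurePreserving_iterate (h : IsInnerFixingZero f F) (n : ℕ) :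
    MeasurePreserving F^[n] m m :=
  h.measurePreserving.iterate n

theorem ae_norm_iterate (h : IsInnerFixingZero f F) (n : ℕ) : ∀ᵐ z ∂m, ‖F^[n] z‖ = 1 :=
  (h.measurePreserving_iterate n).quasiMeasurePreserving.ae ae_norm_eq_one

theorem integrable_comp_iterate (h : IsInnerFixingZero f F) (n : ℕ) {g : ℂ → ℂ}
    (hg : Integrable g m) : Integrable (fun z => g (F^[n] z)) m :=
  (h.measurePreserving_iterate n).integrable_comp_of_integrable hg

theorem integral_comp_iterate (h : IsInnerFixingZero f F) (n : ℕ) {g : ℂ → ℂ}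
    (hg : AEStronglyMeasurable g m) : ∫ z, g (F^[n] z) ∂m = ∫ z, g z ∂m := by
  have hmp := h.measurePreserving_iterate n
  conv_rhs => rw [← hmp.map_eq]
  exact (integral_map hmp.measurable.aemeasurable (by rwa [hmp.map_eq])).symm

theorem integral_mul_comp_iterate (h : IsInnerFixingZero f F) (d : ℕ) {g : ℂ → ℂ}
    (hg : Integrable g m) :
    ∫ z, z * g (F^[d] z) ∂m = (starRingEnd ℂ) (deriv f 0) ^ d * ∫ z, z * g z ∂m := by
  induction d with
  | zero => simp
  | succ d ih =>
    simp only [Function.iterate_succ_apply]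
    rw [h.integral_mul_comp (h.integrable_comp_iterate d hg), ih, pow_succ', mul_assoc]

/-- The backward correlation of two iterates factors out of the integral. -/
theorem integral_mul_conj_iterate_mul (h : IsInnerFixingZero f F) (d : ℕ) {H : ℂ → ℂ}
    (hH : Integrable H m) :
    ∫ z, z * (starRingEnd ℂ) (F^[d] z) * H (F^[d] z) ∂m
      = (starRingEnd ℂ) (deriv f 0) ^ d * ∫ z, H z ∂m := by
  have hg : Integrable (fun w => (starRingEnd ℂ) w * H w) m := by
    refine hH.bdd_mul (c := 1) (by fun_prop) ?_
    filter_upwards [ae_norm_eq_one] with z hz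
    simp [hz]
  have := h.integral_mul_comp_iterate d hg
  simp only [← mul_assoc] at this
  rw [this]
  congr 1
  refine integral_congr_ae ?_
  filter_upwards [ae_norm_eq_one] with z hz
  simp [Complex.mul_conj, Complex.normSq_eq_norm_sq, hz]

theorem integral_conj_mul_iterate_mul (h : IsInnerFixingZero f F) (d : ℕ) {H : ℂ → ℂ}
    (hH : Integrable H m) :
    ∫ z, F^[d] z * (starRingEnd ℂ) z * H (F^[d] z) ∂m = deriv f 0 ^ d * ∫ z, H z ∂m := by
  have hc : Integrable (fun z => (starRingEnd ℂ) (H z)) m :=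
    (integrable_norm_iff (Complex.continuous_conj.comp_aestronglyMeasurable
      hH.aestronglyMeasurable)).1 (by simpa using hH.norm)
  have := congrArg (starRingEnd ℂ) (h.integral_mul_conj_iterate_mul d hc)
  rw [← integral_conj, map_mul, ← integral_conj] at this
  simpa [mul_comm] using this

theorem exists_integral_mul_eq (h : IsInnerFixingZero f F) (a b : ℕ) :
    ∃ C : ℂ, ∀ H : ℂ → ℂ, Integrable H m →
      ∫ z, F^[a] z * (starRingEnd ℂ) (F^[b] z) * H (F^[max a b] z) ∂m = C * ∫ z, H z ∂m := by
  have hmeas := fun n => (h.measurePreserving_iterate n).measurable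
  rcases le_total a b with hab | hab
  · obtain ⟨d, rfl⟩ := Nat.exists_eq_add_of_le' hab
    refine ⟨(starRingEnd ℂ) (deriv f 0) ^ d, fun H hH => ?_⟩
    rw [← h.integral_mul_conj_iterate_mul d hH, max_eq_right hab]
    simp only [Function.iterate_add_apply]
    refine h.integral_comp_iterate a
      (g := fun w => w * (starRingEnd ℂ) (F^[d] w) * H (F^[d] w)) ?_
    exact (measurable_id.mul (Complex.continuous_conj.measurable.comp
      (hmeas d))).aestronglyMeasurable.mul (h.integrable_comp_iterate d hH).aestronglyMeasurable
  · obtain ⟨d, rfl⟩ := Nat.exists_eq_add_of_le' hab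
    refine ⟨deriv f 0 ^ d, fun H hH => ?_⟩
    rw [← h.integral_conj_mul_iterate_mul d hH, max_eq_left hab]
    simp only [Function.iterate_add_apply]
    refine h.integral_comp_iterate b
      (g := fun w => F^[d] w * (starRingEnd ℂ) w * H (F^[d] w)) ?_
    exact ((hmeas d).mul Complex.continuous_conj.measurable).aestronglyMeasurable.mul
      (h.integrable_comp_iterate d hH).aestronglyMeasurable

/-- A correlation of two iterates is uncorrelated with every function of a later iterate. -/
theorem integral_mul_comp_iterate_max (h : IsInnerFixingZero f F) (a b : ℕ) {H : ℂ → ℂ}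
    (hH : Integrable H m) :
    ∫ z, F^[a] z * (starRingEnd ℂ) (F^[b] z) * H (F^[max a b] z) ∂m
      = (∫ z, F^[a] z * (starRingEnd ℂ) (F^[b] z) ∂m) * ∫ z, H (F^[max a b] z) ∂m := by
  obtain ⟨C, hC⟩ := h.exists_integral_mul_eq a b
  have hone := hC (fun _ => 1) (integrable_const 1)
  simp only [mul_one, integral_const, probReal_univ, one_smul] at hone
  rw [hC H hH, hone, h.integral_comp_iterate _ hH.aestronglyMeasurable]

theorem integral_prod (h : IsInnerFixingZero f F) :
    ∀ (p : ℕ) (n j : Fin p → ℕ), (∀ k l, k < l → max (n k) (j k) ≤ min (n l) (j l)) →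
      ∫ z, ∏ k, (F^[n k] z * (starRingEnd ℂ) (F^[j k] z)) ∂m
        = ∏ k, ∫ z, F^[n k] z * (starRingEnd ℂ) (F^[j k] z) ∂m
  | 0, _, _, _ => by simp
  | p + 1, n, j, hsep => by
    set M := max (n 0) (j 0)
    let H : ℂ → ℂ := fun z =>
      ∏ k : Fin p, (F^[n k.succ - M] z * (starRingEnd ℂ) (F^[j k.succ - M] z))
    have hmeas := fun n => (h.measurePreserving_iterate n).measurable
    have hH : Integrable H m := by
      refine .of_bound (C := 1) (Finset.measurable_fun_prod _ fun k _ => (hmeas _).mul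
        (Complex.continuous_conj.measurable.comp (hmeas _))).aestronglyMeasurable ?_
      filter_upwards [ae_all_iff.2 h.ae_norm_iterate] with z hz
      simp [H, hz]
    have hHM : ∀ z, H (F^[M] z)
        = ∏ k : Fin p, (F^[n k.succ] z * (starRingEnd ℂ) (F^[j k.succ] z)) := fun z => by
      refine Finset.prod_congr rfl fun k _ => ?_
      have hk := le_min_iff.1 (hsep 0 k.succ k.succ_pos)
      rw [← Function.iterate_add_apply, ← Function.iterate_add_apply, Nat.sub_add_cancel hk.1,
        Nat.sub_add_cancel hk.2]
    have key := h.integral_mul_comp_iterate_max (n 0) (j 0) hH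
    simp only [show max (n 0) (j 0) = M from rfl, hHM] at key
    simp only [Fin.prod_univ_succ]
    rw [key, h.integral_prod p _ _ fun k l hkl => hsep _ _ (Fin.succ_lt_succ_iff.2 hkl)]

end IsInnerFixingZero

theorem ae_eq_iterate {F G : ℂ → ℂ} (hG : MeasurePreserving G m m) (hFG : F =ᵐ[m] G) (n : ℕ) :
    F^[n] =ᵐ[m] G^[n] := by
  induction n with
  | zero => rfl
  | succ n ih =>
    filter_upwards [hFG, hG.quasiMeasurePreserving.ae ih] with z hz hz'
    rw [Function.iterate_succ_apply, Function.iterate_succ_apply, hz, hz']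

theorem max_le_min_of_lt {p : ℕ} {n j : Fin p → ℕ}
    (hsep : ∀ k : Fin p, ∀ h : (k : ℕ) + 1 < p,
      max (n k) (j k) < min (n ⟨(k : ℕ) + 1, h⟩) (j ⟨(k : ℕ) + 1, h⟩))
    (k l : Fin p) (hkl : k < l) : max (n k) (j k) ≤ min (n l) (j l) := by
  obtain ⟨l, hl⟩ := l
  have hkl' : (k : ℕ) + 1 ≤ l := hkl
  induction l, hkl' using Nat.le_induction with
  | base => exact (hsep k hl).le
  | succ l hkl' ih =>
    exact (ih (by omega) hkl').trans (min_le_max.trans (hsep ⟨l, by omega⟩ hl).le)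

theorem stmt4 (f F : ℂ → ℂ)
    (hf : DifferentiableOn ℂ f (Metric.ball 0 1))
    (hmap : Set.MapsTo f (Metric.ball 0 1) (Metric.ball 0 1))
    (h0 : f 0 = 0)
    (hbd : ∀ᵐ z ∂m, Filter.Tendsto (fun r : ℝ => f ((r : ℂ) * z))
      (nhdsWithin 1 (Set.Iio 1)) (nhds (F z)))
    (hinner : ∀ᵐ z ∂m, ‖F z‖ = 1)
    (p : ℕ) (hp : 0 < p) (n j : Fin p → ℕ)
    (hn : ∀ k, 0 < n k) (hj : ∀ k, 0 < j k)
    (hsep : ∀ k : Fin p, ∀ h : (k : ℕ) + 1 < p,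
      max (n k) (j k) < min (n ⟨(k : ℕ) + 1, h⟩) (j ⟨(k : ℕ) + 1, h⟩)) :
    ∫ z, ∏ k : Fin p, (F^[n k] z * (starRingEnd ℂ) (F^[j k] z)) ∂m
      = ∏ k : Fin p, ∫ z, F^[n k] z * (starRingEnd ℂ) (F^[j k] z) ∂m := by
  have hFm : AEMeasurable F m := aemeasurable_radialLimit hf hbd
  have hFG : F =ᵐ[m] hFm.mk F := hFm.ae_eq_mk
  have hG : IsInnerFixingZero f (hFm.mk F) :=
    { differentiableOn := hf
      mapsTo := hmap
      map_zero := h0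
      tendsto_radial := by
        filter_upwards [hbd, hFG] with z hz hz' using hz' ▸ hz
      norm_eq_one := by
        filter_upwards [hinner, hFG] with z hz hz' using hz' ▸ hz
      measurable := hFm.measurable_mk }
  have hiter := ae_all_iff.2 (ae_eq_iterate hG.measurePreserving hFG)
  calc
    _ = ∫ z, ∏ k, ((hFm.mk F)^[n k] z * (starRingEnd ℂ) ((hFm.mk F)^[j k] z)) ∂m := by
      refine integral_congr_ae ?_
      filter_upwards [hiter] with z hz
      simp only [hz]
    _ = ∏ k, ∫ z, (hFm.mk F)^[n k] z * (starRingEnd ℂ) ((hFm.mk F)^[j k] z) ∂m :=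
      hG.integral_prod p n j (max_le_min_of_lt hsep)
    _ = _ := by
      refine Finset.prod_congr rfl fun k _ => integral_congr_ae ?_
      filter_upwards [hiter] with z hz
      simp only [hz]
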